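/- arXiv:1601.03227 — 4 statements merged into one kernel-verified Lean document; each statement's English description precedes it below -/
import Mathlib

section
/- Let K be a finite field and f(X) ∈ K[X] a polynomial of degree n with n distinct roots in an algebraic closure of K. Then f is a cyclic polynomial (with some cyclicity polynomial C(X) ∈ K[X]) if and only if there exists a polynomial C(X) ∈ K[X] which cyclically permutes the roots of f, i.e., for every root α ∈ K̄ of f one has f(C(α)) = 0 and the elements C^{(i)}(α), i = 1, …, n, are pairwise distinct. -/
open Polynomial

/-- `iterComp C m` is the `m`-fold composition `C^{(m)}` of `C` with itself,
with `C^{(0)} = X`. -/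
noncomputable def iterComp {K : Type*} [CommRing K] (C : K[X]) : ℕ → K[X]
  | 0 => X
  | m + 1 => (iterComp C m).comp C

/-- `f` is a cyclic polynomial with cyclicity polynomial `C`:
`f(C(X)) ≡ 0 mod f(X)`, `C^{(n)}(X) - X ≡ 0 mod f(X)` where `n = deg f`, and
`gcd(C^{(m)}(X) - X, f(X)) = 1` for `1 ≤ m < n`. -/
def IsCyclicPolyWith {K : Type*} [Field K] (f C : K[X]) : Prop :=
  f ∣ f.comp C ∧ f ∣ (iterComp C f.natDegree - X) ∧
    ∀ m : ℕ, 1 ≤ m → m < f.natDegree → IsCoprime (iterComp C m - X) f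

/-!
On a set of `n` points mapped into itself by `φ`, the iterates `φ x, …, φ^[n] x` are distinct for
every `x` exactly when every point has minimal period `n`: `n` distinct iterates exhaust the set, so
the orbit returns to `x`, and no earlier than after `n` steps. Applied to `φ = C` on the roots of
`f`, this gives the theorem, since for a separable `f` the divisibilities by `f` are vanishing
statements at its roots, and coprimality with `f` is non-vanishing at its roots.
-/

open Function

section Dynamics

variable {β : Type*} {φ : β → β} {x : β} {n : ℕ}

theorem minimalPeriod_eq_iff (hn : 0 < n) :
    minimalPeriod φ x = n ↔
      IsPeriodicPt φ n x ∧ ∀ m, 1 ≤ m → m < n → ¬IsPeriodicPt φ m x := by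
  constructor
  · rintro rfl
    exact ⟨isPeriodicPt_minimalPeriod φ x,
      fun m hm hlt ↦ not_isPeriodicPt_of_pos_of_lt_minimalPeriod (by lia) hlt⟩
  · rintro ⟨hper, hmin⟩
    refine (hper.minimalPeriod_le hn).eq_of_not_lt fun hlt ↦ ?_
    exact hmin _ (hper.minimalPeriod_pos hn) hlt (isPeriodicPt_minimalPeriod φ x)

theorem injOn_iterate_Icc_minimalPeriod (φ : β → β) (x : β) :
    Set.InjOn (φ^[·] x) (Set.Icc 1 (minimalPeriod φ x)) := by
  intro i hi j hj hij
  obtain ⟨i, rfl⟩ := Nat.exists_eq_add_of_le' hi.1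
  obtain ⟨j, rfl⟩ := Nat.exists_eq_add_of_le' hj.1
  have hx : x ∈ periodicPts φ := minimalPeriod_pos_iff_mem_periodicPts.1 (hi.1.trans hi.2)
  have hperiod := minimalPeriod_apply hx
  exact congrArg (· + 1) <| iterate_injOn_Iio_minimalPeriod (f := φ) (x := φ x)
    (hperiod ▸ hi.2) (hperiod ▸ hj.2) hij

theorem minimalPeriod_eq_of_injOn_iterate_Icc {s : Finset β} (hs : Set.MapsTo φ s s)
    (hcard : s.card ≤ n) (hx : x ∈ s) (hinj : Set.InjOn (φ^[·] x) (Set.Icc 1 n)) :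
    minimalPeriod φ x = n := by
  obtain ⟨i, hi, hix⟩ : ∃ i ∈ Finset.Icc 1 n, φ^[i] x = x :=
    Finset.surjOn_of_injOn_of_card_le (φ^[·] x) (fun i _ ↦ hs.iterate i hx)
      (by simpa using hinj) (by simpa using hcard) hx
  obtain ⟨hi_pos, hi_le⟩ := Finset.mem_Icc.1 hi
  have hper : IsPeriodicPt φ i x := hix
  have hpos : 0 < minimalPeriod φ x := hper.minimalPeriod_pos hi_pos
  refine ((hper.minimalPeriod_le hi_pos).trans hi_le).eq_of_not_lt fun hlt ↦ hpos.ne' ?_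
  have hreturn : φ^[minimalPeriod φ x + 1] x = φ^[1] x := by
    rw [iterate_succ_apply', iterate_minimalPeriod, iterate_one]
  have := hinj ⟨by lia, hlt⟩ ⟨le_rfl, by lia⟩ hreturn
  lia

theorem forall_minimalPeriod_eq_card_iff_injOn_iterate {s : Finset β} (hs : Set.MapsTo φ s s) :
    (∀ x ∈ s, minimalPeriod φ x = s.card) ↔
      ∀ x ∈ s, Set.InjOn (φ^[·] x) (Set.Icc 1 s.card) :=
  forall₂_congr fun x hx ↦
    ⟨fun h ↦ h ▸ injOn_iterate_Icc_minimalPeriod φ x,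
      minimalPeriod_eq_of_injOn_iterate_Icc hs le_rfl hx⟩

end Dynamics

section Evaluation

variable {R A : Type*} [CommRing R] [CommRing A] [Algebra R A]

theorem aeval_iterComp (C : R[X]) (m : ℕ) (a : A) :
    aeval a (iterComp C m) = (fun x ↦ aeval x C)^[m] a := by
  induction m generalizing a with
  | zero => simp [iterComp]
  | succ m ih => rw [iterComp, aeval_comp, ih, iterate_succ_apply]

theorem aeval_iterComp_sub_X_eq_zero_iff (C : R[X]) (m : ℕ) (a : A) :
    aeval a (iterComp C m - X) = 0 ↔ IsPeriodicPt (fun x ↦ aeval x C) m a := by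
  rw [map_sub, aeval_X, sub_eq_zero, aeval_iterComp, IsPeriodicPt, IsFixedPt]

end Evaluation

section Roots

variable {K L : Type*} [Field K] [Field L] [Algebra K L] {f : K[X]}

theorem splits_and_separable_of_card_toFinset_aroots [DecidableEq L] (hf : f ≠ 0)
    (hcard : (f.aroots L).toFinset.card = f.natDegree) :
    (f.map (algebraMap K L)).Splits ∧ f.Separable := by
  have hle : (f.aroots L).card ≤ f.natDegree := by
    simpa only [natDegree_map] using card_roots' (f.map (algebraMap K L))
  have hroots : (f.aroots L).card = f.natDegree :=
    hle.antisymm (hcard ▸ Multiset.toFinset_card_le _)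
  have hsplits : (f.map (algebraMap K L)).Splits := by
    rw [splits_iff_card_roots, hroots, natDegree_map]
  refine ⟨hsplits, (nodup_aroots_iff_of_splits hf hsplits).1 ?_⟩
  rw [← Multiset.toFinset_card_eq_card_iff_nodup, hcard, hroots]

theorem dvd_iff_forall_mem_rootSet_aeval_eq_zero (hsplits : (f.map (algebraMap K L)).Splits)
    (hsep : f.Separable) {g : K[X]} : f ∣ g ↔ ∀ α ∈ f.rootSet L, aeval α g = 0 := by
  refine ⟨fun hdvd α hα ↦ aeval_eq_zero_of_dvd_aeval_eq_zero hdvd (aeval_eq_zero_of_mem_rootSet hα),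
    fun h ↦ ?_⟩
  rcases eq_or_ne g 0 with rfl | hg
  · exact dvd_zero f
  rw [← map_dvd_map' (algebraMap K L), hsplits.dvd_iff_roots_le_roots (map_ne_zero hsep.ne_zero)
    (map_ne_zero hg), Multiset.le_iff_subset (nodup_roots hsep.map)]
  intro α hα
  exact mem_aroots.2 ⟨hg, h α (mem_rootSet.2 (mem_aroots.1 hα))⟩

theorem isCoprime_iff_forall_mem_rootSet_aeval_ne_zero (hf : f ≠ 0)
    (hsplits : (f.map (algebraMap K L)).Splits) {g : K[X]} :
    IsCoprime g f ↔ ∀ α ∈ f.rootSet L, aeval α g ≠ 0 := by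
  constructor
  · intro hcop α hα
    have hne : aeval α g ≠ 0 ∨ aeval α f ≠ 0 := aeval_ne_zero_of_isCoprime hcop α
    exact hne.resolve_right (not_not.2 (aeval_eq_zero_of_mem_rootSet hα))
  · refine fun h ↦ isCoprime_of_irreducible_dvd (fun h0 ↦ hf h0.2) fun p hp hpg hpf ↦ ?_
    have hp_splits : (p.map (algebraMap K L)).Splits :=
      hsplits.of_dvd (map_ne_zero hf) (Polynomial.map_dvd _ hpf)
    obtain ⟨α, hα⟩ := hp_splits.exists_eval_eq_zero (by simpa using hp.degree_pos.ne')
    rw [eval_map_algebraMap] at hα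
    exact h α (mem_rootSet.2 ⟨hf, aeval_eq_zero_of_dvd_aeval_eq_zero hpf hα⟩)
      (aeval_eq_zero_of_dvd_aeval_eq_zero hpg hα)

theorem dvd_comp_iff_mapsTo_rootSet (hsplits : (f.map (algebraMap K L)).Splits)
    (hsep : f.Separable) {C : K[X]} :
    f ∣ f.comp C ↔ Set.MapsTo (fun x : L ↦ aeval x C) (f.rootSet L) (f.rootSet L) := by
  rw [dvd_iff_forall_mem_rootSet_aeval_eq_zero (L := L) hsplits hsep]
  simp only [Set.MapsTo, mem_rootSet_of_ne hsep.ne_zero, aeval_comp]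

theorem isCyclicPolyWith_iff_minimalPeriod (hsplits : (f.map (algebraMap K L)).Splits)
    (hsep : f.Separable) {C : K[X]} :
    IsCyclicPolyWith f C ↔ Set.MapsTo (fun x : L ↦ aeval x C) (f.rootSet L) (f.rootSet L) ∧
      ∀ α ∈ f.rootSet L, minimalPeriod (fun x : L ↦ aeval x C) α = f.natDegree := by
  set φ : L → L := fun x ↦ aeval x C
  have hreturn : f ∣ iterComp C f.natDegree - X ↔
      ∀ α ∈ f.rootSet L, IsPeriodicPt φ f.natDegree α := by
    simp only [dvd_iff_forall_mem_rootSet_aeval_eq_zero (L := L) hsplits hsep,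
      aeval_iterComp_sub_X_eq_zero_iff, φ]
  have hfree (m : ℕ) : IsCoprime (iterComp C m - X) f ↔
      ∀ α ∈ f.rootSet L, ¬IsPeriodicPt φ m α := by
    simp only [isCoprime_iff_forall_mem_rootSet_aeval_ne_zero (L := L) hsep.ne_zero hsplits,
      ne_eq, aeval_iterComp_sub_X_eq_zero_iff, φ]
  have hperiod (α : L) (hα : α ∈ f.rootSet L) : minimalPeriod φ α = f.natDegree ↔
      IsPeriodicPt φ f.natDegree α ∧ ∀ m, 1 ≤ m → m < f.natDegree → ¬IsPeriodicPt φ m α :=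
    minimalPeriod_eq_iff <| natDegree_pos_of_aeval_root hsep.ne_zero
      (aeval_eq_zero_of_mem_rootSet hα) ((injective_iff_map_eq_zero _).1 (algebraMap K L).injective)
  rw [IsCyclicPolyWith, dvd_comp_iff_mapsTo_rootSet hsplits hsep, hreturn, forall₂_congr hperiod]
  simp only [hfree]
  grind

theorem stmt_2_general [DecidableEq L]
    (hroots : (f.aroots L).toFinset.card = f.natDegree) (C : K[X]) :
    IsCyclicPolyWith f C ↔
      ∀ α : L, aeval α f = 0 →
        aeval (aeval α C) f = 0 ∧
          ∀ i ∈ Finset.Icc 1 f.natDegree, ∀ j ∈ Finset.Icc 1 f.natDegree,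
            aeval α (iterComp C i) = aeval α (iterComp C j) → i = j := by
  rcases eq_or_ne f 0 with rfl | hf
  · simp [IsCyclicPolyWith, iterComp]
  obtain ⟨hsplits, hsep⟩ := splits_and_separable_of_card_toFinset_aroots hf hroots
  have hmem (α : L) : α ∈ (f.aroots L).toFinset ↔ aeval α f = 0 := by simp [hf]
  rw [isCyclicPolyWith_iff_minimalPeriod (L := L) hsplits hsep, rootSet_def, ← hroots]
  simp only [Finset.mem_coe]
  rw [and_congr_right forall_minimalPeriod_eq_card_iff_injOn_iterate]
  simp only [Set.MapsTo, Finset.mem_coe, hmem, aeval_iterComp, Finset.mem_Icc, Set.InjOn,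
    Set.mem_Icc, forall_and]

end Roots

open scoped Classical in
theorem stmt_2 {K : Type*} [Field K] [Fintype K] (f : K[X]) (n : ℕ)
    (hn : f.natDegree = n)
    (hroots : ((f.map (algebraMap K (AlgebraicClosure K))).roots.toFinset).card = n) :
    (∃ C : K[X], IsCyclicPolyWith f C) ↔
      ∃ C : K[X], ∀ α : AlgebraicClosure K, aeval α f = 0 →
        aeval (aeval α C) f = 0 ∧
          ∀ i ∈ Finset.Icc 1 n, ∀ j ∈ Finset.Icc 1 n,
            aeval α (iterComp C i) = aeval α (iterComp C j) → i = j := by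
  subst hn
  exact exists_congr (stmt_2_general hroots)
end

section
/- Let A = K[X]/(f(X)) be a polynomially cyclic algebra over a finite field K with cyclicity polynomial C(X), and let K̃/K be a field extension. Then Ã := A ⊗_K K̃ ≅ K̃[X]/(f(X)) is a polynomially cyclic K̃-algebra with cyclicity polynomial C(X), and there is a canonical group isomorphism Gal(Ã/K̃) ≅ Gal(A/K) (the generator ν̃ of Gal(Ã/K̃) given by C corresponds to the generator ν of Gal(A/K) given by C, i.e. ν̃ = ν ⊗ id). -/
open Polynomial

/-!
The map `K[X] → K̃[X]` preserves composition, divisibility and Bézout identities, hence all of the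
cyclicity conditions. On the other side, `ν ↦ id ⊗ ν` is a group homomorphism
`Aut(A/K) → Aut(K̃ ⊗ A/K̃)`, injective because `A → K̃ ⊗ A` is; transported along
`K̃ ⊗ K[X]/(f) ≅ K̃[X]/(f)` it sends the automorphism `X ↦ C(X)` to the automorphism `X ↦ C(X)`, so
it restricts to an isomorphism between the cyclic groups these generate.
-/

open scoped TensorProduct

theorem iterComp_map {R S : Type*} [CommRing R] [CommRing S] (φ : R →+* S) (C : R[X]) (m : ℕ) :
    iterComp (C.map φ) m = (iterComp C m).map φ := by
  induction m with
  | zero => exact (map_X φ).symm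
  | succ m ih => rw [iterComp, ih, iterComp, Polynomial.map_comp]

theorem iterComp_map_sub_X {R S : Type*} [CommRing R] [CommRing S] (φ : R →+* S) (C : R[X])
    (m : ℕ) : iterComp (C.map φ) m - X = (iterComp C m - X).map φ := by
  rw [iterComp_map, Polynomial.map_sub, map_X]

theorem IsCyclicPolyWith.map {K L : Type*} [Field K] [Field L] (φ : K →+* L) {f C : K[X]}
    (h : IsCyclicPolyWith f C) : IsCyclicPolyWith (f.map φ) (C.map φ) := by
  obtain ⟨dvd_comp, dvd_iterComp, isCoprime_iterComp⟩ := h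
  refine ⟨?_, ?_, fun m one_le_m m_lt ↦ ?_⟩
  · rw [← Polynomial.map_comp]
    exact Polynomial.map_dvd φ dvd_comp
  · rw [natDegree_map, iterComp_map_sub_X]
    exact Polynomial.map_dvd φ dvd_iterComp
  · rw [natDegree_map] at m_lt
    rw [iterComp_map_sub_X]
    exact (isCoprime_iterComp m one_le_m m_lt).map (mapRingHom φ)

section ZPowers

variable {G H : Type*} [Group G] [Group H]

/-- The isomorphism from the cyclic group generated by `g` onto the one generated by `φ g` which an
injective homomorphism `φ` induces by restriction. -/
noncomputable def zpowersEquivOfInjective (φ : G →* H) (hφ : Function.Injective φ) (g : G) :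
    Subgroup.zpowers g ≃* Subgroup.zpowers (φ g) :=
  ((Subgroup.zpowers g).equivMapOfInjective φ hφ).trans
    (MulEquiv.subgroupCongr (φ.map_zpowers g))

theorem zpowersEquivOfInjective_generator (φ : G →* H) (hφ : Function.Injective φ) (g : G) :
    zpowersEquivOfInjective φ hφ g ⟨g, Subgroup.mem_zpowers g⟩ =
      ⟨φ g, Subgroup.mem_zpowers (φ g)⟩ :=
  rfl

end ZPowers

section AutBaseChange

variable {R A : Type*} (S : Type*) [CommSemiring R] [CommSemiring S] [Algebra R S] [Semiring A]
  [Algebra R A]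

/-- Extension of scalars on automorphism groups, `σ ↦ id ⊗ σ`. -/
noncomputable def autBaseChange : (A ≃ₐ[R] A) →* ((S ⊗[R] A) ≃ₐ[S] (S ⊗[R] A)) where
  toFun σ := Algebra.TensorProduct.congr AlgEquiv.refl σ
  map_one' := Algebra.TensorProduct.congr_refl
  map_mul' σ τ := Algebra.TensorProduct.congr_trans AlgEquiv.refl AlgEquiv.refl τ σ

@[simp]
theorem autBaseChange_tmul (σ : A ≃ₐ[R] A) (s : S) (a : A) :
    autBaseChange S σ (s ⊗ₜ[R] a) = s ⊗ₜ[R] σ a :=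
  rfl

theorem autBaseChange_injective [Module.Flat R A] (hS : Function.Injective (algebraMap R S)) :
    Function.Injective (autBaseChange S : (A ≃ₐ[R] A) →* _) := by
  intro σ τ hστ
  ext a
  apply Algebra.TensorProduct.includeRight_injective hS
  exact DFunLike.congr_fun hστ (1 ⊗ₜ[R] a)

end AutBaseChange

section AdjoinRootBaseChange

variable {R : Type*} (S : Type*) [CommRing R] [CommRing S] [Algebra R S] (f : R[X])

/-- The canonical isomorphism `S ⊗ R[X]/(f) ≅ S[X]/(f)`. -/
noncomputable def adjoinRootBaseChange :
    (S ⊗[R] AdjoinRoot f) ≃ₐ[S] AdjoinRoot (f.map (algebraMap R S)) :=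
  (AdjoinRoot.tensorAlgEquiv f _ rfl).trans
    (AdjoinRoot.mapAlgEquiv (Algebra.TensorProduct.rid R S S) _ _ (by
      rw [Polynomial.map_map]
      apply Associated.of_eq
      congr 1
      ext r
      simp [Algebra.algebraMap_eq_smul_one]))

theorem adjoinRootBaseChange_one_tmul_root :
    adjoinRootBaseChange S f (1 ⊗ₜ[R] AdjoinRoot.root f) =
      AdjoinRoot.root (f.map (algebraMap R S)) := by
  rw [adjoinRootBaseChange, AlgEquiv.trans_apply, AdjoinRoot.tensorAlgEquiv_root,
    AdjoinRoot.coe_mapAlgEquiv, AdjoinRoot.map_root]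

theorem adjoinRootBaseChange_one_tmul_aeval (g : R[X]) :
    adjoinRootBaseChange S f (1 ⊗ₜ[R] aeval (AdjoinRoot.root f) g) =
      aeval (AdjoinRoot.root (f.map (algebraMap R S))) (g.map (algebraMap R S)) := by
  let ι : AdjoinRoot f →ₐ[R] AdjoinRoot (f.map (algebraMap R S)) :=
    ((adjoinRootBaseChange S f).toAlgHom.restrictScalars R).comp
      Algebra.TensorProduct.includeRight
  have ι_root : ι (AdjoinRoot.root f) = AdjoinRoot.root (f.map (algebraMap R S)) :=
    adjoinRootBaseChange_one_tmul_root S f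
  calc
    ι (aeval (AdjoinRoot.root f) g) = aeval (ι (AdjoinRoot.root f)) g :=
      (aeval_algHom_apply ι _ g).symm
    _ = aeval (AdjoinRoot.root (f.map (algebraMap R S))) (g.map (algebraMap R S)) := by
      rw [ι_root, aeval_map_algebraMap]

/-- Extension of scalars on automorphism groups, `Aut(R[X]/(f)) → Aut(S[X]/(f))`: the transport of
`σ ↦ id ⊗ σ` along `S ⊗ R[X]/(f) ≅ S[X]/(f)`. -/
noncomputable def adjoinRootAutBaseChange :
    (AdjoinRoot f ≃ₐ[R] AdjoinRoot f) →*
      (AdjoinRoot (f.map (algebraMap R S)) ≃ₐ[S] AdjoinRoot (f.map (algebraMap R S))) :=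
  (AlgEquiv.autCongr (adjoinRootBaseChange S f)).toMonoidHom.comp (autBaseChange S)

variable {f}

theorem adjoinRootAutBaseChange_apply_tmul (σ : AdjoinRoot f ≃ₐ[R] AdjoinRoot f) (s : S)
    (a : AdjoinRoot f) :
    adjoinRootAutBaseChange S f σ (adjoinRootBaseChange S f (s ⊗ₜ[R] a)) =
      adjoinRootBaseChange S f (s ⊗ₜ[R] σ a) := by
  change adjoinRootBaseChange S f
    (autBaseChange S σ ((adjoinRootBaseChange S f).symm (adjoinRootBaseChange S f _))) = _
  rw [AlgEquiv.symm_apply_apply, autBaseChange_tmul]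

theorem adjoinRootAutBaseChange_apply_root {σ : AdjoinRoot f ≃ₐ[R] AdjoinRoot f} {C : R[X]}
    (hσ : σ (AdjoinRoot.root f) = aeval (AdjoinRoot.root f) C) :
    adjoinRootAutBaseChange S f σ (AdjoinRoot.root (f.map (algebraMap R S))) =
      aeval (AdjoinRoot.root (f.map (algebraMap R S))) (C.map (algebraMap R S)) := by
  rw [← adjoinRootBaseChange_one_tmul_aeval, ← hσ, ← adjoinRootAutBaseChange_apply_tmul,
    adjoinRootBaseChange_one_tmul_root]

theorem adjoinRootAutBaseChange_injective [Module.Flat R (AdjoinRoot f)]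
    (hS : Function.Injective (algebraMap R S)) :
    Function.Injective (adjoinRootAutBaseChange S f) :=
  (AlgEquiv.autCongr (adjoinRootBaseChange S f)).injective.comp (autBaseChange_injective S hS)

end AdjoinRootBaseChange

theorem stmt_6_general {K Kt : Type*} [Field K] [Field Kt] [Algebra K Kt]
    (f C : K[X]) (hcyc : IsCyclicPolyWith f C)
    (ν : AdjoinRoot f ≃ₐ[K] AdjoinRoot f)
    (hν : ν (AdjoinRoot.root f) = aeval (AdjoinRoot.root f) C) :
    IsCyclicPolyWith (f.map (algebraMap K Kt)) (C.map (algebraMap K Kt)) ∧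
    ∃ (e : (Kt ⊗[K] AdjoinRoot f) ≃ₐ[Kt] AdjoinRoot (f.map (algebraMap K Kt)))
      (νt : AdjoinRoot (f.map (algebraMap K Kt)) ≃ₐ[Kt] AdjoinRoot (f.map (algebraMap K Kt))),
      νt (AdjoinRoot.root (f.map (algebraMap K Kt))) =
          aeval (AdjoinRoot.root (f.map (algebraMap K Kt))) (C.map (algebraMap K Kt)) ∧
      (∀ (k : Kt) (a : AdjoinRoot f), e (k ⊗ₜ[K] ν a) = νt (e (k ⊗ₜ[K] a))) ∧
      ∃ iso : Subgroup.zpowers νt ≃* Subgroup.zpowers ν,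
        iso ⟨νt, Subgroup.mem_zpowers νt⟩ = ⟨ν, Subgroup.mem_zpowers ν⟩ := by
  have hinj : Function.Injective (adjoinRootAutBaseChange Kt f) :=
    adjoinRootAutBaseChange_injective Kt (algebraMap K Kt).injective
  refine ⟨hcyc.map (algebraMap K Kt), adjoinRootBaseChange Kt f, adjoinRootAutBaseChange Kt f ν,
    adjoinRootAutBaseChange_apply_root Kt hν,
    fun k a ↦ (adjoinRootAutBaseChange_apply_tmul Kt ν k a).symm,
    (zpowersEquivOfInjective _ hinj ν).symm, ?_⟩
  rw [MulEquiv.symm_apply_eq, zpowersEquivOfInjective_generator]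

open scoped TensorProduct in
theorem stmt_6 {K Kt : Type*} [Field K] [Fintype K] [Field Kt] [Algebra K Kt]
    (f C : K[X]) (n : ℕ) (hn : f.natDegree = n) (hcyc : IsCyclicPolyWith f C)
    (ν : AdjoinRoot f ≃ₐ[K] AdjoinRoot f)
    (hν : ν (AdjoinRoot.root f) = aeval (AdjoinRoot.root f) C)
    (hord : orderOf ν = n) :
    IsCyclicPolyWith (f.map (algebraMap K Kt)) (C.map (algebraMap K Kt)) ∧
    ∃ (e : (Kt ⊗[K] AdjoinRoot f) ≃ₐ[Kt] AdjoinRoot (f.map (algebraMap K Kt)))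
      (νt : AdjoinRoot (f.map (algebraMap K Kt)) ≃ₐ[Kt] AdjoinRoot (f.map (algebraMap K Kt))),
      νt (AdjoinRoot.root (f.map (algebraMap K Kt))) =
          aeval (AdjoinRoot.root (f.map (algebraMap K Kt))) (C.map (algebraMap K Kt)) ∧
      (∀ (k : Kt) (a : AdjoinRoot f), e (k ⊗ₜ[K] ν a) = νt (e (k ⊗ₜ[K] a))) ∧
      ∃ iso : Subgroup.zpowers νt ≃* Subgroup.zpowers ν,
        iso ⟨νt, Subgroup.mem_zpowers νt⟩ = ⟨ν, Subgroup.mem_zpowers ν⟩ := by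
  exact stmt_6_general f C hcyc ν hν
end

section
/- Let A be a polynomially cyclic algebra over a finite field K with Gal(A/K) = ⟨ν⟩ of order n, let ρ_n be a primitive n-th root of unity over K, and let χ: Gal(A/K) → K[ρ_n]^* be a multiplicative character of order r. Then for every α ∈ A, the r-th power of the Lagrange resolvent lies in the base field extension: (χ, α)^r ∈ K[ρ_n] (viewed inside A_{ρ_n}). -/
open Polynomial

/-!
Write `θ` for the root of `f` in `A` and `B = L ⊗ A`. The resolvent `S` satisfies `w • ν S = S` with
`w = χ(ν)`, so `w ^ r = 1` makes `S ^ r` invariant under `ν`. An invariant `z ∈ B` is `p(θ)` with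
`p ∈ L[X]` of degree less than `n`, so the `n` conjugates `ν ^ i θ` are roots of `p - z ∈ B[X]`. By
the gcd condition their differences are units, so `p - z` vanishes as it would over a field, and
`z` is the constant coefficient of `p`.
-/

theorem eq_zero_of_degree_lt_of_eval_eq_zero_of_isUnit_sub {B ι : Type*} [CommRing B]
    {s : Finset ι} {v : ι → B} (hv : (s : Set ι).Pairwise fun i j => IsUnit (v i - v j))
    {p : B[X]} (hdeg : p.degree < s.card) (hroot : ∀ i ∈ s, p.eval (v i) = 0) : p = 0 := by
  nontriviality B
  by_contra hp
  have hdvd : ∏ i ∈ s, (X - C (v i)) ∣ p :=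
    Finset.prod_dvd_of_coprime
      (fun i hi j hj hij => isCoprime_X_sub_C_of_isUnit_sub (hv hi hj hij))
      fun i hi => dvd_iff_isRoot.2 (hroot i hi)
  refine (monic_prod_X_sub_C v s).not_dvd_of_degree_lt hp ?_ hdvd
  rwa [degree_eq_natDegree (monic_prod_X_sub_C v s).ne_zero, natDegree_finsetProd_X_sub_C_eq_card]

section Resolvent

variable {L B : Type*} [CommRing L] [CommRing B] [Algebra L B]

theorem pairwise_isUnit_pow_apply_sub_pow_apply {σ : B →ₐ[L] B} {θ : B} {n : ℕ}
    (hunit : ∀ m, 1 ≤ m → m < n → IsUnit ((σ ^ m) θ - θ)) :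
    (Finset.range n : Set ℕ).Pairwise fun i j => IsUnit ((σ ^ i) θ - (σ ^ j) θ) := by
  have isUnit_of_lt {i j : ℕ} (hij : i < j) (hj : j < n) :
      IsUnit ((σ ^ j) θ - (σ ^ i) θ) := by
    have himage := (hunit (j - i) (by lia) (by lia)).map (σ ^ i)
    rwa [map_sub, ← AlgHom.mul_apply, ← pow_add, Nat.add_sub_cancel' hij.le] at himage
  intro i hi j hj hij
  rw [Finset.mem_coe, Finset.mem_range] at hi hj
  rcases hij.lt_or_gt with hlt | hgt
  · exact IsUnit.sub_iff.1 (isUnit_of_lt hlt hj)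
  · exact isUnit_of_lt hgt hi

theorem mem_range_algebraMap_of_apply_eq_self (pb : PowerBasis L B) {σ : B →ₐ[L] B}
    (hunit : ∀ m, 1 ≤ m → m < pb.dim → IsUnit ((σ ^ m) pb.gen - pb.gen))
    {z : B} (hz : σ z = z) : z ∈ Set.range (algebraMap L B) := by
  cases subsingleton_or_nontrivial B
  · exact ⟨0, Subsingleton.elim _ _⟩
  obtain ⟨p, hdeg, hp⟩ := pb.exists_eq_aeval z
  have hfix (i : ℕ) : (σ ^ i) z = z := by
    rw [AlgHom.coe_pow]
    exact Function.iterate_fixed hz i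
  have hzero : p.map (algebraMap L B) - C z = 0 := by
    refine eq_zero_of_degree_lt_of_eval_eq_zero_of_isUnit_sub
      (pairwise_isUnit_pow_apply_sub_pow_apply hunit) ?_ fun i _ => ?_
    · rw [Finset.card_range]
      refine degree_le_natDegree.trans_lt (Nat.cast_lt.2 ?_)
      rw [natDegree_sub_C]
      exact natDegree_map_le.trans_lt hdeg
    · rw [eval_sub, eval_C, eval_map_algebraMap, aeval_algHom_apply, ← hp, hfix, sub_self]
  refine ⟨p.coeff 0, ?_⟩
  rw [← coeff_map, sub_eq_zero.1 hzero, coeff_C_zero]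

/-- The Lagrange resolvent of `b` for an endomorphism `σ` and the value `w = χ(σ)` of a character
`χ`, with `n` the order of `σ`. -/
def lagrangeResolvent (σ : B →ₐ[L] B) (w : L) (n : ℕ) (b : B) : B :=
  ∑ i ∈ Finset.range n, w ^ (i + 1) • (σ ^ (i + 1)) b

theorem smul_apply_lagrangeResolvent {σ : B →ₐ[L] B} {w : L} {n : ℕ} {b : B}
    (hσ : (σ ^ n) b = b) (hw : w ^ n = 1) :
    w • σ (lagrangeResolvent σ w n b) = lagrangeResolvent σ w n b := by
  let term (i : ℕ) : B := w ^ i • (σ ^ i) b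
  have hshift (i : ℕ) : w • σ (term i) = term (i + 1) := by
    simp only [term, map_smul, smul_smul, pow_succ', AlgHom.mul_apply]
  have hperiod : term n = term 0 := by
    simp only [term, hσ, hw, pow_zero, AlgHom.one_apply]
  calc w • σ (∑ i ∈ Finset.range n, term (i + 1))
      = ∑ i ∈ Finset.range n, term (i + 1 + 1) := by
        simp only [map_sum, Finset.smul_sum, hshift]
    _ = ∑ i ∈ Finset.range n, term (i + 1) := by
        rw [← add_left_inj (term (0 + 1)), ← Finset.sum_range_succ' (fun i => term (i + 1)),
          Finset.sum_range_succ, ← hshift n, hperiod, hshift]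

theorem apply_lagrangeResolvent_pow {σ : B →ₐ[L] B} {w : L} {n r : ℕ} {b : B}
    (hσ : (σ ^ n) b = b) (hwn : w ^ n = 1) (hwr : w ^ r = 1) :
    σ (lagrangeResolvent σ w n b ^ r) = lagrangeResolvent σ w n b ^ r := by
  conv_rhs => rw [← smul_apply_lagrangeResolvent hσ hwn, _root_.smul_pow, hwr, one_smul, ← map_pow]

end Resolvent

section BaseChange

open scoped TensorProduct

variable {R A : Type*} (L : Type*) [CommRing R] [CommRing A] [CommRing L] [Algebra R A]
  [Algebra R L]

/-- The power basis of `L ⊗[R] A` over `L` generated by `1 ⊗ₜ θ`, where `θ` generates the given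
power basis of `A` over `R`. -/
noncomputable def powerBasisBaseChange (pb : PowerBasis R A) : PowerBasis L (L ⊗[R] A) where
  gen := 1 ⊗ₜ pb.gen
  dim := pb.dim
  basis := Algebra.TensorProduct.basis L pb.basis
  basis_eq_pow i := by
    rw [Algebra.TensorProduct.basis_apply, pb.basis_eq_pow, Algebra.TensorProduct.tmul_pow, one_pow]

/-- The `L`-linear extension of an `R`-algebra endomorphism of `A` to `L ⊗[R] A`, acting as the
identity on `L`. -/
noncomputable def algEndBaseChange (φ : A →ₐ[R] A) : L ⊗[R] A →ₐ[L] L ⊗[R] A :=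
  Algebra.TensorProduct.map (AlgHom.id L L) φ

variable {L}

theorem algEndBaseChange_pow_tmul (φ : A →ₐ[R] A) (m : ℕ) (l : L) (a : A) :
    (algEndBaseChange L φ ^ m) (l ⊗ₜ[R] a) = l ⊗ₜ[R] (φ ^ m) a := by
  induction m with
  | zero => rfl
  | succ m ih =>
    rw [pow_succ', pow_succ', AlgHom.mul_apply, ih, AlgHom.mul_apply]
    rfl

theorem lagrangeResolvent_algEndBaseChange_one_tmul (φ : A →ₐ[R] A) (w : L) (n : ℕ) (a : A) :
    lagrangeResolvent (algEndBaseChange L φ) w n (1 ⊗ₜ[R] a) =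
      ∑ i ∈ Finset.range n, (w ^ (i + 1)) ⊗ₜ[R] (φ ^ (i + 1)) a := by
  simp only [lagrangeResolvent, algEndBaseChange_pow_tmul, TensorProduct.smul_tmul', smul_eq_mul,
    mul_one]

theorem exists_lagrangeResolvent_pow_eq_tmul_one (pb : PowerBasis R A) {φ : A →ₐ[R] A}
    (hunit : ∀ m, 1 ≤ m → m < pb.dim → IsUnit ((φ ^ m) pb.gen - pb.gen)) {w : L} {n r : ℕ} {a : A}
    (hφ : (φ ^ n) a = a) (hwn : w ^ n = 1) (hwr : w ^ r = 1) :
    ∃ l : L, lagrangeResolvent (algEndBaseChange L φ) w n (1 ⊗ₜ[R] a) ^ r = l ⊗ₜ[R] (1 : A) := by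
  have hunit_baseChange (m : ℕ) (hm : 1 ≤ m) (hlt : m < pb.dim) :
      IsUnit ((algEndBaseChange L φ ^ m) (1 ⊗ₜ[R] pb.gen) - 1 ⊗ₜ[R] pb.gen) := by
    rw [algEndBaseChange_pow_tmul, ← TensorProduct.tmul_sub]
    exact (hunit m hm hlt).map (Algebra.TensorProduct.includeRight : A →ₐ[R] L ⊗[R] A)
  have hperiod : (algEndBaseChange L φ ^ n) (1 ⊗ₜ[R] a) = 1 ⊗ₜ[R] a := by
    rw [algEndBaseChange_pow_tmul, hφ]
  obtain ⟨l, hl⟩ := mem_range_algebraMap_of_apply_eq_self (powerBasisBaseChange L pb)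
    hunit_baseChange (apply_lagrangeResolvent_pow hperiod hwn hwr)
  exact ⟨l, hl.symm⟩

end BaseChange

section IterComp

variable {R : Type*} [CommRing R] {f C : R[X]} {φ : AdjoinRoot f →ₐ[R] AdjoinRoot f}

theorem pow_apply_root_eq_aeval_iterComp
    (hφ : φ (AdjoinRoot.root f) = aeval (AdjoinRoot.root f) C) (m : ℕ) :
    (φ ^ m) (AdjoinRoot.root f) = aeval (AdjoinRoot.root f) (iterComp C m) := by
  induction m with
  | zero => rw [iterComp, aeval_X, pow_zero, AlgHom.one_apply]
  | succ m ih =>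
    rw [iterComp, aeval_comp, ← hφ, aeval_algHom_apply, ← ih, pow_succ', AlgHom.mul_apply]

theorem pow_apply_root_sub_root (hφ : φ (AdjoinRoot.root f) = aeval (AdjoinRoot.root f) C) (m : ℕ) :
    (φ ^ m) (AdjoinRoot.root f) - AdjoinRoot.root f = AdjoinRoot.mk f (iterComp C m - X) := by
  rw [pow_apply_root_eq_aeval_iterComp hφ, AdjoinRoot.aeval_eq, map_sub, AdjoinRoot.mk_X]

end IterComp

section CyclicPolynomial

variable {K : Type*} [Field K] {f C : K[X]} {φ : AdjoinRoot f →ₐ[K] AdjoinRoot f}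

theorem pow_natDegree_eq_one (hcyc : IsCyclicPolyWith f C)
    (hφ : φ (AdjoinRoot.root f) = aeval (AdjoinRoot.root f) C) : φ ^ f.natDegree = 1 := by
  refine AdjoinRoot.algHom_ext (sub_eq_zero.1 ?_)
  rw [AlgHom.one_apply, pow_apply_root_sub_root hφ, AdjoinRoot.mk_eq_zero]
  exact hcyc.2.1

theorem isUnit_pow_apply_root_sub_root (hcyc : IsCyclicPolyWith f C)
    (hφ : φ (AdjoinRoot.root f) = aeval (AdjoinRoot.root f) C) {m : ℕ} (hm : 1 ≤ m)
    (hlt : m < f.natDegree) : IsUnit ((φ ^ m) (AdjoinRoot.root f) - AdjoinRoot.root f) := by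
  have hcoprime := (hcyc.2.2 m hm hlt).map (AdjoinRoot.mk f)
  rwa [AdjoinRoot.mk_self, isCoprime_zero_right, ← pow_apply_root_sub_root hφ] at hcoprime

open scoped TensorProduct in
theorem stmt_9_general {L : Type*} [CommRing L] [Algebra K L] (hcyc : IsCyclicPolyWith f C)
    (ν : AdjoinRoot f ≃ₐ[K] AdjoinRoot f)
    (hν : ν (AdjoinRoot.root f) = aeval (AdjoinRoot.root f) C)
    (χ : Subgroup.zpowers ν →* Lˣ) {r : ℕ} (hr : χ ^ r = 1) (a : AdjoinRoot f) :
    ∃ l : L,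
      (∑ i ∈ Finset.range f.natDegree,
        ((χ ⟨ν, Subgroup.mem_zpowers ν⟩ : L) ^ (i + 1)) ⊗ₜ[K] ((ν ^ (i + 1)) a)) ^ r
      = l ⊗ₜ[K] (1 : AdjoinRoot f) := by
  rcases eq_or_ne f 0 with rfl | hf
  · refine ⟨0 ^ r, ?_⟩
    rw [natDegree_zero, Finset.range_zero, Finset.sum_empty, ← TensorProduct.zero_tmul (R := K) L 1,
      Algebra.TensorProduct.tmul_pow, one_pow]
  set g : Subgroup.zpowers ν := ⟨ν, Subgroup.mem_zpowers ν⟩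
  let φ : AdjoinRoot f →ₐ[K] AdjoinRoot f := ν
  have hφ_pow (m : ℕ) (b : AdjoinRoot f) : (φ ^ m) b = (ν ^ m) b := by
    rw [AlgHom.coe_pow, AlgEquiv.coe_pow]
    rfl
  have hφn : φ ^ f.natDegree = 1 := pow_natDegree_eq_one hcyc hν
  have hgn : g ^ f.natDegree = 1 :=
    Subtype.ext (AlgEquiv.ext fun b => (hφ_pow _ b).symm.trans (DFunLike.congr_fun hφn b))
  have hwn : (χ g : L) ^ f.natDegree = 1 := by
    rw [← Units.val_pow_eq_pow_val, ← map_pow, hgn, map_one, Units.val_one]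
  have hwr : (χ g : L) ^ r = 1 := by
    rw [← Units.val_pow_eq_pow_val, ← MonoidHom.pow_apply, hr, MonoidHom.one_apply, Units.val_one]
  simp only [← hφ_pow, ← lagrangeResolvent_algEndBaseChange_one_tmul]
  exact exists_lagrangeResolvent_pow_eq_tmul_one (AdjoinRoot.powerBasis hf)
    (fun _ => isUnit_pow_apply_root_sub_root hcyc hν) (DFunLike.congr_fun hφn a) hwn hwr

end CyclicPolynomial

open scoped TensorProduct in
theorem stmt_9 {K L : Type*} [Field K] [Fintype K] [Field L] [Algebra K L]
    (f C : K[X]) (n : ℕ) (hn : f.natDegree = n) (hcyc : IsCyclicPolyWith f C)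
    (ν : AdjoinRoot f ≃ₐ[K] AdjoinRoot f)
    (hν : ν (AdjoinRoot.root f) = aeval (AdjoinRoot.root f) C)
    (hord : orderOf ν = n)
    (ρ : L) (hρ : IsPrimitiveRoot ρ n) (hL : Algebra.adjoin K {ρ} = ⊤)
    (χ : ↥(Subgroup.zpowers ν) →* Lˣ) (r : ℕ) (hr : orderOf χ = r)
    (a : AdjoinRoot f) :
    ∃ l : L,
      (∑ i ∈ Finset.range n,
        (((χ ⟨ν, Subgroup.mem_zpowers ν⟩ : Lˣ) : L) ^ (i + 1)) ⊗ₜ[K] ((ν ^ (i + 1)) a)) ^ r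
      = l ⊗ₜ[K] (1 : AdjoinRoot f) := by
  subst hn hr
  exact stmt_9_general hcyc ν hν χ (pow_orderOf_eq_one χ) a
end

section
/- Let K be a finite field, n a positive integer, and let B, C be commutative K-algebras equipped with K-algebra automorphisms ν of B and σ of C, each of order n. Let θ ∈ B, ζ ∈ C, and suppose α: B → C is a K-algebra isomorphism with α ∘ ν = σ ∘ α and α(θ) = Σ_{i=1}^{n} b_i σ^i(ζ) with b_i ∈ K. Let q divide n, let ρ_q be a primitive q-th root of unity over K, and define θ^{(q)} = Σ_{j=1}^{n/q} ν^{jq}(θ), ζ^{(q)} = Σ_{j=1}^{n/q} σ^{jq}(ζ), b_i^{(q)} = Σ_{k=1}^{n/q} b_{kq+i} for 1 ≤ i ≤ q (indices of b taken modulo n), τ_e(χ_q) = Σ_{a=1}^{q} ρ_q^a ν^a(θ^{(q)}), τ(χ_q) = Σ_{j=1}^{q} ρ_q^j σ^j(ζ^{(q)}), and β(χ_q) = Σ_{i=1}^{q} ρ_q^{-i} b_i^{(q)}. Then, extending α to B ⊗_K K[ρ_q] → C ⊗_K K[ρ_q] by the identity on ρ_q, one has α(τ_e(χ_q)) = β(χ_q)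 · τ(χ_q). -/
/-!
Every term of a Gauss sum is of the form `T ^ m (1 ⊗ x)` for the operator `T = ρ ⊗ σ`. Collapsing
the inner sums over multiples of `q`, on which `ρ` is trivial, turns each Gauss sum into the full
orbit sum `τ x = ∑ T ^ m (1 ⊗ x)` over one period of `T`. Such a sum is unchanged when `T` is
applied to its argument, that is `ρ ^ i • τ (σ ^ i x) = τ x`, so expanding `α θ` in the conjugates
of `ζ` pulls the factor `∑ b i • ρ ^ (-i)` out of `τ (α θ)`.
-/

open Finset Function
open scoped TensorProduct

section PeriodicSums

variable {M : Type*} [AddCommMonoid M] {f : ℕ → M} {n q d : ℕ}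

theorem sum_range_add_of_periodic (hf : Periodic f n) (c : ℕ) :
    ∑ m ∈ range n, f (m + c) = ∑ m ∈ range n, f m := by
  calc ∑ m ∈ range n, f (m + c)
      = ((Multiset.Ico c (c + n)).map f).sum := by
        rw [range_eq_Ico, sum_Ico_add', zero_add, add_comm n c]; rfl
    _ = (((Multiset.Ico c (c + n)).map (· % n)).map f).sum := by
        simp only [Multiset.map_map, comp_def, hf.map_mod_nat]
    _ = ∑ m ∈ range n, f m := by rw [Nat.multiset_Ico_map_mod]; rfl

theorem sum_range_sum_range_mul_add (f : ℕ → M) (q d : ℕ) :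
    ∑ a ∈ range q, ∑ k ∈ range d, f (k * q + a) = ∑ m ∈ range (d * q), f m := by
  induction d with
  | zero => simp
  | succ d ih => simp only [sum_range_succ, sum_add_distrib, ih, Nat.succ_mul, sum_range_add]

theorem sum_range_sum_range_of_periodic (hf : Periodic f n) (hd : d * q = n) :
    ∑ a ∈ range q, ∑ k ∈ range d, f ((k + 1) * q + (a + 1)) = ∑ m ∈ range n, f (m + 1) := by
  calc ∑ a ∈ range q, ∑ k ∈ range d, f ((k + 1) * q + (a + 1))
      = ∑ a ∈ range q, ∑ k ∈ range d, f (k * q + a + (q + 1)) := by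
        refine sum_congr rfl fun a _ ↦ sum_congr rfl fun k _ ↦ congrArg f ?_
        ring
    _ = ∑ m ∈ range n, f (m + (q + 1)) := by
        rw [sum_range_sum_range_mul_add (fun m ↦ f (m + (q + 1))), hd]
    _ = ∑ m ∈ range n, f (m + 1) := by
        rw [sum_range_add_of_periodic hf, sum_range_add_of_periodic hf]

end PeriodicSums

theorem pow_mul_add_of_pow_eq_one {G : Type*} [Monoid G] {g : G} {q : ℕ} (hg : g ^ q = 1)
    (k a : ℕ) : g ^ (k * q + a) = g ^ a := by
  rw [pow_add, pow_mul', hg, one_pow, one_mul]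

section GaussSums

variable {R L M N : Type*} [CommSemiring R] [Semiring L] [Algebra R L]
  [AddCommMonoid M] [Module R M] [AddCommMonoid N] [Module R N]

/-- The operator `x ↦ x^{(q)} = ∑_{j=1}^{d} σ^{jq}(x)`; for `σ` of order `d * q` it is the trace of
the subgroup generated by `σ ^ q`. -/
def periodSum (σ : Module.End R M) (q d : ℕ) : Module.End R M :=
  ∑ j ∈ range d, σ ^ ((j + 1) * q)

/-- The Gauss (twisted) sum `x ↦ ∑_{m=1}^{n} ρ^m ⊗ σ^m(x)` of the character `σ ↦ ρ`. The scalar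
factor is on the left, so that `L ⊗[R] M` is an `L`-module. -/
def twistedSum (ρ : L) (σ : Module.End R M) (n : ℕ) : M →ₗ[R] L ⊗[R] M :=
  ∑ m ∈ range n, TensorProduct.mk R L M (ρ ^ (m + 1)) ∘ₗ σ ^ (m + 1)

/-- The folded coefficients `b_i^{(q)} = ∑_{k=1}^{d} b_{kq+i}`. -/
def periodCoeff (b : ℕ → R) (q d i : ℕ) : R :=
  ∑ k ∈ range d, b ((k + 1) * q + i)

/-- The twisted sum of coefficients `β = ∑_{i=1}^{n} b_i ρ^{-i}`. The root of unity is a unit of `L`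
because of the negative powers. -/
def twistedCoeff (ρ : Lˣ) (b : ℕ → R) (n : ℕ) : L :=
  ∑ i ∈ range n, b (i + 1) • ((ρ ^ (-(i + 1 : ℤ)) : Lˣ) : L)

theorem periodSum_apply (σ : Module.End R M) (q d : ℕ) (x : M) :
    periodSum σ q d x = ∑ j ∈ range d, (σ ^ ((j + 1) * q)) x := by
  simp only [periodSum, LinearMap.sum_apply]

theorem twistedSum_apply (ρ : L) (σ : Module.End R M) (n : ℕ) (x : M) :
    twistedSum ρ σ n x = ∑ m ∈ range n, (ρ ^ (m + 1)) ⊗ₜ[R] (σ ^ (m + 1)) x := by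
  simp only [twistedSum, LinearMap.sum_apply, LinearMap.comp_apply, TensorProduct.mk_apply]

section Intertwining

variable {ν : Module.End R M} {σ : Module.End R N} {α : M →ₗ[R] N}

theorem map_pow_apply_of_intertwining (hα : σ ∘ₗ α = α ∘ₗ ν) (m : ℕ) (x : M) :
    α ((ν ^ m) x) = (σ ^ m) (α x) :=
  (LinearMap.congr_fun (Module.End.commute_pow_left_of_commute hα m) x).symm

theorem map_periodSum (hα : σ ∘ₗ α = α ∘ₗ ν) (q d : ℕ) (x : M) :
    α (periodSum ν q d x) = periodSum σ q d (α x) := by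
  simp only [periodSum_apply, map_sum, map_pow_apply_of_intertwining hα]

theorem lTensor_twistedSum (hα : σ ∘ₗ α = α ∘ₗ ν) (ρ : L) (n : ℕ) (x : M) :
    α.lTensor L (twistedSum ρ ν n x) = twistedSum ρ σ n (α x) := by
  simp only [twistedSum_apply, map_sum, LinearMap.lTensor_tmul, map_pow_apply_of_intertwining hα]

end Intertwining

variable {σ : Module.End R M} {n q d : ℕ}

theorem periodic_pow_tmul_pow_apply {ρ : L} (hρ : ρ ^ n = 1) (hσ : σ ^ n = 1) (x : M) :
    Periodic (fun m ↦ (ρ ^ m) ⊗ₜ[R] (σ ^ m) x) n := fun m ↦ by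
  simp only [pow_add, hρ, hσ, mul_one]

theorem twistedSum_periodSum {ρ : L} (hρ : ρ ^ q = 1) (hσ : σ ^ n = 1) (hd : d * q = n) (x : M) :
    twistedSum ρ σ q (periodSum σ q d x) = twistedSum ρ σ n x := by
  have hρn : ρ ^ n = 1 := by rw [← hd, pow_mul', hρ, one_pow]
  rw [twistedSum_apply, twistedSum_apply, periodSum_apply]
  simp only [map_sum, TensorProduct.tmul_sum]
  rw [← sum_range_sum_range_of_periodic (periodic_pow_tmul_pow_apply hρn hσ x) hd]
  refine sum_congr rfl fun a _ ↦ sum_congr rfl fun j _ ↦ ?_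
  rw [pow_mul_add_of_pow_eq_one hρ, ← Module.End.mul_apply, ← pow_add, add_comm (a + 1)]

theorem twistedCoeff_periodCoeff {ρ : Lˣ} (hρ : ρ ^ q = 1) {b : ℕ → R} (hb : Periodic b n)
    (hd : d * q = n) : twistedCoeff ρ (periodCoeff b q d) q = twistedCoeff ρ b n := by
  have hρ_inv : ρ⁻¹ ^ q = 1 := by rw [inv_pow, hρ, inv_one]
  have hρ_inv_n : ρ⁻¹ ^ n = 1 := by rw [← hd, pow_mul', hρ_inv, one_pow]
  have hzpow (i : ℕ) : ρ ^ (-(i + 1 : ℤ)) = ρ⁻¹ ^ (i + 1) := by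
    rw [zpow_neg, inv_pow]; norm_cast
  have hper : Periodic (fun m ↦ b m • ((ρ⁻¹ ^ m : Lˣ) : L)) n := fun m ↦ by
    simp only [hb m, pow_add, hρ_inv_n, mul_one]
  simp only [twistedCoeff, periodCoeff, hzpow, sum_smul]
  rw [← sum_range_sum_range_of_periodic hper hd]
  simp only [pow_mul_add_of_pow_eq_one hρ_inv]

theorem pow_smul_twistedSum_pow_apply {ρ : L} (hρ : ρ ^ n = 1) (hσ : σ ^ n = 1) (i : ℕ) (x : M) :
    ρ ^ i • twistedSum ρ σ n ((σ ^ i) x) = twistedSum ρ σ n x := by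
  have hper := periodic_pow_tmul_pow_apply (R := R) hρ hσ x
  calc ρ ^ i • twistedSum ρ σ n ((σ ^ i) x)
      = ∑ m ∈ range n, (ρ ^ (m + (1 + i))) ⊗ₜ[R] (σ ^ (m + (1 + i))) x := by
        simp only [twistedSum_apply, smul_sum, TensorProduct.smul_tmul', smul_eq_mul, ← pow_add,
          ← Module.End.mul_apply, add_comm i, add_assoc]
    _ = twistedSum ρ σ n x := by
        rw [twistedSum_apply, sum_range_add_of_periodic hper, sum_range_add_of_periodic hper]

theorem twistedSum_sum_smul_pow_apply {ρ : Lˣ} (hρ : ρ ^ n = 1) (hσ : σ ^ n = 1) (b : ℕ → R)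
    (x : M) :
    twistedSum (ρ : L) σ n (∑ i ∈ range n, b (i + 1) • (σ ^ (i + 1)) x) =
      twistedCoeff ρ b n • twistedSum (ρ : L) σ n x := by
  have hρL : (ρ : L) ^ n = 1 := by rw [← Units.val_pow_eq_pow_val, hρ, Units.val_one]
  have hconj (i : ℕ) : twistedSum (ρ : L) σ n ((σ ^ (i + 1)) x) =
      ((ρ ^ (-(i + 1 : ℤ)) : Lˣ) : L) • twistedSum (ρ : L) σ n x := by
    rw [← pow_smul_twistedSum_pow_apply hρL hσ (i + 1) x, smul_smul, ← Units.val_pow_eq_pow_val,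
      ← Units.val_mul, ← zpow_natCast, ← zpow_add]
    simp
  simp only [map_sum, map_smul, hconj, twistedCoeff, sum_smul, smul_assoc]

theorem stmt_18_general {ν : Module.End R M} {σ : Module.End R N} (hσ : σ ^ n = 1)
    {α : M →ₗ[R] N} (hα : σ ∘ₗ α = α ∘ₗ ν) {b : ℕ → R} (hb : Periodic b n) {θ : M} {ζ : N}
    (hθ : α θ = ∑ i ∈ range n, b (i + 1) • (σ ^ (i + 1)) ζ)
    (hd : d * q = n) {ρ : Lˣ} (hρ : ρ ^ q = 1) :
    α.lTensor L (twistedSum (ρ : L) ν q (periodSum ν q d θ)) =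
      twistedCoeff ρ (periodCoeff b q d) q •
        twistedSum (ρ : L) σ q (periodSum σ q d ζ) := by
  have hρL : (ρ : L) ^ q = 1 := by rw [← Units.val_pow_eq_pow_val, hρ, Units.val_one]
  have hρn : ρ ^ n = 1 := by rw [← hd, pow_mul', hρ, one_pow]
  rw [lTensor_twistedSum hα, map_periodSum hα, twistedSum_periodSum hρL hσ hd, hθ,
    twistedSum_sum_smul_pow_apply hρn hσ, twistedCoeff_periodCoeff hρ hb hd,
    twistedSum_periodSum hρL hσ hd]

end GaussSums

section AlgEquiv

variable {R A : Type*} [CommSemiring R] [Semiring A] [Algebra R A]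

theorem algEquiv_toLinearMap_pow (σ : A ≃ₐ[R] A) (m : ℕ) :
    (σ.toLinearMap : Module.End R A) ^ m = (σ ^ m).toLinearMap := by
  ext x
  simp [Module.End.pow_apply]

theorem algEquiv_toLinearMap_pow_orderOf (σ : A ≃ₐ[R] A) :
    (σ.toLinearMap : Module.End R A) ^ orderOf σ = 1 := by
  rw [algEquiv_toLinearMap_pow, pow_orderOf_eq_one]
  rfl

end AlgEquiv

open scoped TensorProduct in
theorem stmt_18 {K B C L : Type*} [Field K] [Fintype K] [CommRing B] [CommRing C]
    [Algebra K B] [Algebra K C] [Field L] [Algebra K L]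
    (n : ℕ) (hn : 0 < n)
    (ν : B ≃ₐ[K] B) (σ : C ≃ₐ[K] C) (hν : orderOf ν = n) (hσ : orderOf σ = n)
    (θ : B) (ζ : C) (α : B ≃ₐ[K] C) (hint : ∀ x : B, α (ν x) = σ (α x))
    (b : ℕ → K) (hper : ∀ i, b (i + n) = b i)
    (hθ : α θ = ∑ i ∈ Finset.range n, b (i + 1) • ((σ ^ (i + 1)) ζ))
    (q : ℕ) (hq : q ∣ n) (hq0 : 0 < q)
    (ρ : L) (hρ : IsPrimitiveRoot ρ q) :
    Algebra.TensorProduct.map (AlgHom.id K L) α.toAlgHom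
      (∑ a ∈ Finset.range q,
        (ρ ^ (a + 1)) ⊗ₜ[K]
          ((ν ^ (a + 1)) (∑ j ∈ Finset.range (n / q), ((ν ^ ((j + 1) * q)) θ))))
    = ((∑ i ∈ Finset.range q,
          (∑ k ∈ Finset.range (n / q), b ((k + 1) * q + (i + 1))) •
            (ρ ^ (-(i + 1 : ℤ)))) ⊗ₜ[K] (1 : C))
      * (∑ j ∈ Finset.range q,
          (ρ ^ (j + 1)) ⊗ₜ[K]
            ((σ ^ (j + 1)) (∑ i ∈ Finset.range (n / q), ((σ ^ ((i + 1) * q)) ζ)))) := by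
  have hα : σ.toLinearMap ∘ₗ α.toLinearMap = α.toLinearMap ∘ₗ ν.toLinearMap :=
    LinearMap.ext fun x ↦ (hint x).symm
  have hρu : Units.mk0 ρ (hρ.ne_zero hq0.ne') ^ q = 1 := Units.ext hρ.pow_eq_one
  have hgauss := stmt_18_general (hσ ▸ algEquiv_toLinearMap_pow_orderOf σ) hα hper (θ := θ) (ζ := ζ)
    (by simpa only [algEquiv_toLinearMap_pow, AlgEquiv.toLinearMap_apply] using hθ)
    (Nat.div_mul_cancel hq) hρu
  simp only [twistedSum_apply, periodSum_apply, twistedCoeff, periodCoeff, algEquiv_toLinearMap_pow,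
    Algebra.smul_def (A := L ⊗[K] C), Algebra.TensorProduct.algebraMap_apply,
    Algebra.algebraMap_self_apply, Units.val_zpow_eq_zpow_val, Units.val_mk0] at hgauss
  exact hgauss
end
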